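/- arXiv:1902.10512 — 2 statements merged into one kernel-verified Lean document; each statement's English description precedes it below -/
import Mathlib

section
/- Let n be an odd integer with 1 ≤ n < 2l²−1 and gcd(n, 2l²) = 1, and let w be an integer with γ^w = 2 in F_q (w = ind_γ 2). Then there exist rational integers a_3, …, a_l, b_3, …, b_l, and c_3, …, c_l such that J_{2l²}(1,n) ≡ ζ_{l²}^{−w(n+1)}·(−1 + Σ_{i=3}^{l} a_i (ζ_{l²} − 1)^i)·(−1 + Σ_{i=3}^{l} b_i (ζ_{l²}^n − 1)^i)·(−1 + Σ_{i=3}^{l} c_i (ζ_{l²}^{(1−l²)/2} − 1)^i) (mod (1−ζ_{l²})^{l+1}). -/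
open Complex Finset

/-- The `i`-th power character: `χ^i(v) = χ(v)^i` for `v ≠ 0`, with the convention
`χ^i(0) = 0` (in particular `χ^0(0) = 0`). -/
noncomputable def charPow {F : Type*} [DecidableEq F] [Zero F] (χ : F → ℂ) (i : ℤ) (v : F) : ℂ :=
  if v = 0 then 0 else χ v ^ i

/-- The Jacobi sum `J_e(i,j) = ∑_{v ∈ F_q} χ_e^i(v) χ_e^j(v+1)`. -/
noncomputable def jSum {F : Type*} [Field F] [Fintype F] [DecidableEq F]
    (χ : F → ℂ) (i j : ℤ) : ℂ :=
  ∑ v : F, charPow χ i v * charPow χ j (v + 1)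

theorem aux_flip {F R : Type*} [Field F] [Fintype F] [DecidableEq F] [CommRing R]
    (h2 : IsUnit (2:R)) (I : F → R) (hI : ∀ x y, x ≠ 0 → y ≠ 0 → I (x*y) = I x + I y)
    (g : F) (hg : g ≠ 0) (hρ : quadraticChar F g = -1) (hIg : I g = 0) (h : R → R) :
    ∑ u : F, (quadraticChar F u : R) * h (I u) = 0 := by
  have e : ∑ u : F, (quadraticChar F u : R) * h (I u)
      = ∑ u : F, (quadraticChar F (g*u) : R) * h (I (g*u)) :=
    (Equiv.sum_comp (Equiv.mulLeft₀ g hg) (fun u => (quadraticChar F u : R) * h (I u))).symm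
  have e2 : ∑ u : F, (quadraticChar F (g*u) : R) * h (I (g*u))
      = - ∑ u : F, (quadraticChar F u : R) * h (I u) := by
    rw [← Finset.sum_neg_distrib]
    refine Finset.sum_congr rfl fun u _ => ?_
    by_cases hu : u = 0
    · subst hu; simp
    · rw [map_mul, hρ, hI g u hg hu, hIg]; push_cast; ring_nf
  rw [e2] at e
  have : (2:R) * ∑ u : F, (quadraticChar F u : R) * h (I u) = 0 := by linear_combination e
  exact (h2.mul_right_eq_zero).1 this

theorem aux_quot {F R : Type*} [Field F] [Fintype F] [DecidableEq F] [CommRing R]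
    (h2 : IsUnit (2:R)) (I : F → R) (hI : ∀ x y, x ≠ 0 → y ≠ 0 → I (x*y) = I x + I y)
    (g : F) (hg : g ≠ 0) (hρ : quadraticChar F g = -1) (hIg : I g = 0) (h : R → R) :
    ∑ v : F, (quadraticChar F (v*(v+1)) : R) * h (I v - I (v+1)) = - h 0 := by
  have h1 : I 1 = 0 := by have := hI 1 1 one_ne_zero one_ne_zero; simpa using this
  have hf := aux_flip h2 I hI g hg hρ hIg h
  rw [← Finset.sum_erase_add _ _ (Finset.mem_univ (1:F))] at hf
  simp only [h1, map_one, Int.cast_one, one_mul] at hf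
  rw [← Finset.sum_erase_add _ _ (Finset.mem_univ (-1:F))]
  have : ∑ v ∈ univ.erase (-1:F), (quadraticChar F (v*(v+1)) : R) * h (I v - I (v+1))
      = ∑ u ∈ univ.erase (1:F), (quadraticChar F u : R) * h (I u) := by
    refine Finset.sum_bij' (fun v _ => v / (v+1)) (fun u _ => u / (1-u)) ?_ ?_ ?_ ?_ ?_
    · intro v hv
      have hv : v ≠ -1 := by simpa using hv
      have : v + 1 ≠ 0 := fun h => hv (by linear_combination h)
      simp only [mem_erase, mem_univ, and_true, ne_eq]
      rw [div_eq_one_iff_eq this]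
      intro h; exact one_ne_zero (α := F) (by linear_combination -h)
    · intro u hu
      have hu : u ≠ 1 := by simpa using hu
      have : 1 - u ≠ 0 := fun h => hu (by linear_combination -h)
      simp only [mem_erase, mem_univ, and_true, ne_eq]
      rw [div_eq_iff this]
      intro h; exact one_ne_zero (α := F) (by linear_combination h)
    · intro v hv
      have hv : v ≠ -1 := by simpa using hv
      have : v + 1 ≠ 0 := fun h => hv (by linear_combination h)
      have h3 : 1 - v/(v+1) = 1/(v+1) := by field_simp; ring
      simp only [h3]; field_simp
    · intro u hu
      have hu : u ≠ 1 := by simpa using hu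
      have : 1 - u ≠ 0 := fun h => hu (by linear_combination -h)
      have h3 : u/(1-u)+1 = 1/(1-u) := by field_simp; ring
      simp only [h3]; field_simp
    · intro v hv
      have hv : v ≠ -1 := by simpa using hv
      have h3 : v + 1 ≠ 0 := fun h => hv (by linear_combination h)
      by_cases h0 : v = 0
      · subst h0; simp
      have hq : v / (v+1) ≠ 0 := div_ne_zero h0 h3
      have e1 : I v = I (v/(v+1)) + I (v+1) := by
        rw [← hI _ _ hq h3, div_mul_cancel₀ _ h3]
      have e2 : quadraticChar F (v*(v+1)) = quadraticChar F (v/(v+1)) := by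
        have : v*(v+1) = (v/(v+1)) * (v+1)^2 := by field_simp
        rw [this, map_mul, map_pow, quadraticChar_sq_one h3, mul_one]
      rw [e2, e1, add_sub_cancel_right]
  rw [this, neg_add_cancel, mul_zero, MulChar.map_zero, Int.cast_zero, zero_mul]
  linear_combination hf

theorem aux_sq {F R : Type*} [Field F] [Fintype F] [DecidableEq F] [CommRing R]
    (hF : ringChar F ≠ 2)
    (h2 : IsUnit (2:R)) (I : F → R) (hI : ∀ x y, x ≠ 0 → y ≠ 0 → I (x*y) = I x + I y)
    (g : F) (hg : g ≠ 0) (hρ : quadraticChar F g = -1) (hIg : I g = 0) (h : R → R) :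
    ∑ v : F, (quadraticChar F (v*(v+1)) : R) * h (I v + I (v+1)) =
    ∑ v : F, (quadraticChar F (v*(v+1)) : R) * h (I v - 2 * I 2) := by
  have two : (2:F) ≠ 0 := Ring.two_ne_zero hF
  have four : (4:F) ≠ 0 := by
    have : (4:F) = 2*2 := by norm_num
    rw [this]; exact mul_ne_zero two two
  have I4 : I 4 = 2 * I 2 := by
    have : (4:F) = 2*2 := by norm_num
    rw [this, hI _ _ two two]; ring
  have ρ4 : quadraticChar F 4 = 1 := by
    have : (4:F) = 2^2 := by norm_num
    rw [this, map_pow, quadraticChar_sq_one two]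
  set f : F → R := fun u => (quadraticChar F u : R) * h (I u) with hf
  have s1 : ∑ v : F, (quadraticChar F (v*(v+1)) : R) * h (I v + I (v+1)) = ∑ v : F, f (v*(v+1)) := by
    refine Finset.sum_congr rfl fun v _ => ?_
    simp only [hf]
    by_cases h0 : v = 0
    · simp [h0]
    by_cases h1 : v + 1 = 0
    · simp [h1]
    rw [hI _ _ h0 h1]
  have s2 : ∑ v : F, f (v*(v+1)) = ∑ x : F, f ((x^2-1)/4) := by
    refine Fintype.sum_bijective (fun v : F => 2*v+1) ?_ _ _ ?_
    · refine (Finite.injective_iff_bijective).1 ?_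
      intro a b hab
      have : (2:F) * a = 2 * b := by simpa using hab
      exact mul_left_cancel₀ two this
    · intro v; congr 1; field_simp; ring
  have s3 : ∑ x : F, f ((x^2-1)/4) = ∑ a : F, ((quadraticChar F a : R) + 1) * f ((a-1)/4) := by
    rw [← Finset.sum_fiberwise (s := univ) (g := fun x : F => x^2)]
    refine Finset.sum_congr rfl fun a _ => ?_
    rw [Finset.sum_congr rfl (g := fun _ => f ((a-1)/4))]
    · rw [Finset.sum_const, nsmul_eq_mul]
      congr 1
      have := quadraticChar_card_sqrts hF a
      have h' : ((({x : F | x^2 = a}.toFinset).card : ℤ) : R) = ((quadraticChar F a + 1 : ℤ) : R) := by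
        rw [this]
      push_cast at h'
      rw [← h']
      congr 2
      ext x; simp
    · intro x hx; simp at hx; rw [hx]
  have s4 : ∑ a : F, ((quadraticChar F a : R) + 1) * f ((a-1)/4)
      = ∑ t : F, ((quadraticChar F (t+1) : R) + 1) * f (t/4) := by
    symm
    refine Fintype.sum_equiv (Equiv.addRight (1:F)) _ _ ?_
    intro t; simp
  have s5 : ∀ t : F, f (t/4) = (quadraticChar F t : R) * h (I t - 2 * I 2) := by
    intro t
    simp only [hf]
    by_cases h0 : t = 0
    · simp [h0]
    have e : t = t/4*4 := by field_simp
    have e1 : I t = I (t/4) + I 4 := by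
      conv_lhs => rw [e]
      rw [hI _ _ (div_ne_zero h0 four) four]
    have e2 : quadraticChar F t = quadraticChar F (t/4) := by
      conv_lhs => rw [e]
      rw [map_mul, ρ4, mul_one]
    rw [e1, e2, I4]; congr 2; ring
  rw [s1, s2, s3, s4]
  simp only [s5]
  have z := aux_flip h2 I hI g hg hρ hIg (fun x => h (x - 2 * I 2))
  calc _ = ∑ t : F, ((quadraticChar F (t*(t+1)) : R) * h (I t - 2 * I 2)) +
        ∑ t : F, (quadraticChar F t : R) * h (I t - 2 * I 2) := by
          rw [← Finset.sum_add_distrib]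
          refine Finset.sum_congr rfl fun t _ => ?_
          rw [map_mul]; push_cast; ring
    _ = _ := by rw [z, add_zero]

theorem aux_moments {F R : Type*} [Field F] [Fintype F] [DecidableEq F] [CommRing R]
    (hF : ringChar F ≠ 2)
    (h2 : IsUnit (2:R)) (I : F → R) (hI : ∀ x y, x ≠ 0 → y ≠ 0 → I (x*y) = I x + I y)
    (g : F) (hg : g ≠ 0) (hρ : quadraticChar F g = -1) (hIg : I g = 0) (n : R) :
    (∑ v : F, (quadraticChar F (v*(v+1)) : R) = -1) ∧
    (∑ v : F, (quadraticChar F (v*(v+1)) : R) * (I v + n * I (v+1)) = 2 * I 2 * (n+1)) ∧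
    (3 * (∑ v : F, (quadraticChar F (v*(v+1)) : R) * (I v + n * I (v+1))^2) =
      - 3 * (2 * I 2 * (n+1))^2) := by
  have h1 : I 1 = 0 := by have := hI 1 1 one_ne_zero one_ne_zero; simpa using this
  have hm1 : I (-1) = 0 := by
    have := hI (-1) (-1) (by simp) (by simp)
    rw [neg_mul_neg, one_mul, h1] at this
    exact (h2.mul_right_eq_zero).1 (by linear_combination -this : (2:R) * I (-1) = 0)
  have hneg : ∀ x, I (-x) = I x := by
    intro x
    by_cases h0 : x = 0
    · simp [h0]
    rw [← neg_one_mul, hI _ _ (by simp) h0, hm1, zero_add]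
  have S0 := aux_quot h2 I hI g hg hρ hIg (fun _ => 1)
  have Q2 := aux_quot h2 I hI g hg hρ hIg (fun x => x^2)
  have T1 := aux_sq hF h2 I hI g hg hρ hIg (fun x => x)
  have T2 := aux_sq hF h2 I hI g hg hρ hIg (fun x => x^2)
  have sym : ∀ h : R → R, ∑ v : F, (quadraticChar F (v*(v+1)) : R) * h (I (v+1)) =
      ∑ v : F, (quadraticChar F (v*(v+1)) : R) * h (I v) := by
    intro h
    refine Fintype.sum_equiv ((Equiv.neg F).trans (Equiv.subRight (1:F))) _ _ ?_
    intro v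
    have e : -v - 1 = -(v+1) := by ring
    simp only [Equiv.trans_apply, Equiv.neg_apply, Equiv.subRight_apply]
    have e2 : (-v-1)*(-v-1+1) = v*(v+1) := by ring
    rw [e2, e, hneg]
  have y1 := sym (fun x => x)
  have y2 := sym (fun x => x^2)
  simp only [mul_one] at S0
  set s : F → R := fun v => (quadraticChar F (v*(v+1)) : R) with hs
  have t1 : ∑ v, s v * (I v + I (v+1)) = ∑ v, s v * I v + ∑ v, s v * I (v+1) := by
    rw [← Finset.sum_add_distrib]; exact Finset.sum_congr rfl fun v _ => by ring
  have t2 : ∑ v, s v * (I v - 2 * I 2) = ∑ v, s v * I v - 2 * I 2 * ∑ v, s v := by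
    rw [Finset.mul_sum, ← Finset.sum_sub_distrib]; exact Finset.sum_congr rfl fun v _ => by ring
  have t3 : ∀ n : R, ∑ v, s v * (I v + n * I (v+1))^2 = ∑ v, s v * I v^2 +
      2 * n * ∑ v, s v * (I v * I (v+1)) + n^2 * ∑ v, s v * I (v+1)^2 := by
    intro n
    rw [Finset.mul_sum, Finset.mul_sum, ← Finset.sum_add_distrib, ← Finset.sum_add_distrib]
    exact Finset.sum_congr rfl fun v _ => by ring
  have t4 : ∑ v, s v * (I v - 2 * I 2)^2 = ∑ v, s v * I v^2 - 2 * (2 * I 2) * ∑ v, s v * I v +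
     (2 * I 2)^2 * ∑ v, s v := by
    rw [Finset.mul_sum, Finset.mul_sum, ← Finset.sum_sub_distrib, ← Finset.sum_add_distrib]
    exact Finset.sum_congr rfl fun v _ => by ring
  have t5 : ∑ v, s v * (I v + n * I (v+1)) = ∑ v, s v * I v + n * ∑ v, s v * I (v+1) := by
    rw [Finset.mul_sum, ← Finset.sum_add_distrib]; exact Finset.sum_congr rfl fun v _ => by ring
  have t6 := t3 (-1)
  have t7 := t3 1
  have t8 := t3 n
  simp only [neg_one_mul, ← sub_eq_add_neg, one_mul] at t6 t7
  change ∑ v, s v * (I v - I (v+1))^2 = - 0^2 at Q2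
  change ∑ v, s v * (I v + I (v+1)) = ∑ v, s v * (I v - 2 * I 2) at T1
  change ∑ v, s v * (I v + I (v+1))^2 = ∑ v, s v * (I v - 2 * I 2)^2 at T2
  change ∑ v, s v * I (v+1) = ∑ v, s v * I v at y1
  change ∑ v, s v * I (v+1)^2 = ∑ v, s v * I v^2 at y2
  rw [t6, y2] at Q2
  rw [t1, t2, y1, S0] at T1
  rw [t7, t4, y2, S0] at T2
  rw [t5, t8, y1, y2]
  generalize ∑ v, s v * I v^2 = C at *
  generalize ∑ v, s v * I v = A at *
  generalize ∑ v, s v * (I v * I (v+1)) = D at *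
  have hA : A = 2 * I 2 := by linear_combination T1
  have hD : D = C := by
    have : (2:R) * (D - C) = 0 := by linear_combination -Q2
    have := (h2.mul_right_eq_zero).1 this
    linear_combination this
  subst hD
  subst hA
  refine ⟨S0, by ring, ?_⟩
  linear_combination (n+1)^2 * T2

theorem aux_expand {R : Type*} [CommRing R] (z : R) (k : ℕ) :
    (z-1)^3 ∣ 2 * z^k - (2 + 2 * k * (z-1) + ((k:R)^2 - k) * (z-1)^2) := by
  induction k with
  | zero => simp
  | succ k ih =>
    obtain ⟨c, hc⟩ := ih
    refine ⟨z * c + (k^2-k), ?_⟩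
    have : 2 * z^k = (2 + 2 * k * (z-1) + ((k:R)^2 - k) * (z-1)^2) + (z-1)^3 * c := by
      linear_combination hc
    push_cast
    rw [pow_succ]
    linear_combination z * this

theorem aux_l {R : Type*} [CommRing R] [IsDomain R] (l : ℕ) (hl : l.Prime) (hl3 : 3 ≤ l)
    (z : R) (hz : IsPrimitiveRoot z (l^2)) : (z-1)^3 ∣ (l : R) := by
  have := Fact.mk hl
  have h1 := Polynomial.eval_one_cyclotomic_prime_pow (R := R) (p := l) 1
  rw [Polynomial.cyclotomic_eq_prod_X_sub_primitiveRoots hz, Polynomial.eval_prod] at h1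
  rw [← h1]
  have h2 : (∏ _j ∈ primitiveRoots (l^(1+1)) R, (z-1)) ∣
      ∏ j ∈ primitiveRoots (l^(1+1)) R, Polynomial.eval 1 (Polynomial.X - Polynomial.C j) := by
    refine Finset.prod_dvd_prod_of_dvd _ _ fun j hj => ?_
    have hpos : 0 < l^2 := by positivity
    have hj' := (mem_primitiveRoots hpos).1 hj
    have : NeZero (l^2) := ⟨hpos.ne'⟩
    obtain ⟨i, -, hi⟩ := hz.eq_pow_of_pow_eq_one hj'.pow_eq_one
    simp only [Polynomial.eval_sub, Polynomial.eval_X, Polynomial.eval_C]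
    rw [← hi, ← neg_sub (z^i) 1, dvd_neg]
    exact sub_one_dvd_pow_sub_one z i
  refine dvd_trans ?_ h2
  rw [Finset.prod_const]
  refine pow_dvd_pow _ ?_
  change 3 ≤ (primitiveRoots (l^2) R).card
  rw [hz.card_primitiveRoots, Nat.totient_prime_pow hl (by norm_num)]
  have : 2 ≤ l - 1 := by omega
  calc 3 ≤ 3 * 2 := by norm_num
    _ ≤ l^(2-1) * (l-1) := Nat.mul_le_mul (by simpa using hl3) this

theorem aux_trunc {R : Type*} [CommRing R] (x : R) (N : ℕ) (P : Polynomial ℤ) :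
    ∃ (a : ℕ → ℤ) (Q : Polynomial ℤ), Polynomial.aeval x P =
      ∑ i ∈ range N, (a i : R) * x^i + x^N * Polynomial.aeval x Q := by
  induction N with
  | zero => exact ⟨0, P, by simp⟩
  | succ N ih =>
    obtain ⟨a, Q, h⟩ := ih
    refine ⟨fun i => if i = N then Q.coeff 0 else a i, Q.divX, ?_⟩
    rw [Finset.sum_range_succ, h]
    have e : Polynomial.aeval x Q = Polynomial.aeval x Q.divX * x + (Q.coeff 0 : R) := by
      conv_lhs => rw [← Polynomial.divX_mul_X_add Q]
      simp
    rw [e]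
    have : ∑ i ∈ range N, ((if i = N then Q.coeff 0 else a i : ℤ) : R) * x^i
       = ∑ i ∈ range N, (a i : R) * x^i := by
      refine Finset.sum_congr rfl fun i hi => ?_
      rw [if_neg (by simp at hi; omega)]
    rw [this]; simp; ring

theorem aux_cong {ι R : Type*} [Fintype ι] [CommRing R] (l : ℕ) (hodd : Odd l)
    (z : R) (hz : (z-1)^3 ∣ (l:R)) (s : ι → ℤ) (k : ι → ℕ) (k' : ℕ)
    (h0 : (l:ℤ) ∣ ∑ v, s v + 1) (h1 : (l:ℤ) ∣ ∑ v, s v * k v + k')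
    (h2 : (l:ℤ) ∣ ∑ v, s v * (k v)^2 + (k':ℤ)^2) :
    (z-1)^3 ∣ ∑ v, (s v : R) * z^(k v) + z^k' := by
  have cast : ∀ x : ℤ, (l:ℤ) ∣ x → (z-1)^3 ∣ (x:R) := by
    rintro x ⟨y, rfl⟩
    push_cast
    exact hz.mul_right _
  have c0 := cast _ h0
  have c1 := cast _ h1
  have c2 := cast _ h2
  push_cast at c0 c1 c2
  set D := ∑ v, (s v : R) * z^(k v) + z^k' with hD
  have d1 : (z-1)^3 ∣ ∑ v, (s v : R) * (2 * z^(k v) - (2 + 2 * (k v) * (z-1) + ((k v:R)^2 - (k v)) * (z-1)^2))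
      + (2 * z^k' - (2 + 2 * k' * (z-1) + ((k':R)^2 - k') * (z-1)^2)) :=
    dvd_add (Finset.dvd_sum fun v _ => (aux_expand z (k v)).mul_left _) (aux_expand z k')
  have e : ∑ v, (s v : R) * (2 * z^(k v) - (2 + 2 * (k v) * (z-1) + ((k v:R)^2 - (k v)) * (z-1)^2))
     = 2 * ∑ v, (s v : R) * z^(k v) - (2 * ∑ v, (s v : R) + (2 * (z-1) - (z-1)^2) * ∑ v, (s v : R) * k v
       + (z-1)^2 * ∑ v, (s v : R) * (k v)^2) := by
    simp only [Finset.mul_sum]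
    rw [← Finset.sum_add_distrib, ← Finset.sum_add_distrib, ← Finset.sum_sub_distrib]
    exact Finset.sum_congr rfl fun v _ => by ring
  rw [e] at d1
  have d2 : (z-1)^3 ∣ 2 * D := by
    have := dvd_add d1 (dvd_add (dvd_add (c0.mul_left 2) (c1.mul_left (2 * (z-1) - (z-1)^2)))
      (c2.mul_left ((z-1)^2)))
    refine this.trans (dvd_of_eq ?_)
    rw [hD]; ring
  obtain ⟨h, rfl⟩ := hodd
  have : D = ((2*h+1 : ℕ) : R) * D - h * (2 * D) := by push_cast; ring
  rw [this]
  exact dvd_sub (hz.mul_right _) (d2.mul_left _)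

theorem aux_zpow {M : ℕ} {z : ℂ} (hM : M ≠ 0) (hz : IsPrimitiveRoot z M) (a b : ℤ) :
    z^a = z^b ↔ (a : ZMod M) = b := by
  have z0 : z ≠ 0 := hz.ne_zero hM
  rw [ZMod.intCast_eq_intCast_iff_dvd_sub, ← hz.zpow_eq_one_iff_dvd, zpow_sub₀ z0,
    div_eq_one_iff_eq (zpow_ne_zero _ z0)]
  exact eq_comm

theorem aux_npow {M : ℕ} {z : ℂ} (hM : M ≠ 0) (hz : IsPrimitiveRoot z M) (a b : ℕ) :
    z^a = z^b ↔ (a : ZMod M) = b := by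
  have := aux_zpow hM hz a b
  simpa using this

theorem aux_ind {F : Type*} [Field F] [Fintype F] [DecidableEq F]
    (M h : ℕ) (hM : M = 2*h+1) (γ : F) (hγ : ∀ x : F, x ≠ 0 → ∃ k : ℕ, γ ^ k = x)
    (ζ : ℂ) (hζ : IsPrimitiveRoot ζ (2*M))
    (χ : F → ℂ) (hχγ : χ γ = ζ) (hγ0 : γ ≠ 0)
    (hχmul : ∀ x y : F, χ (x * y) = χ x * χ y)
    (w : ℤ) (hw : γ ^ w = 2) (two : (2:F) ≠ 0) :
    ∃ I : F → ZMod M, (∀ x y, x ≠ 0 → y ≠ 0 → I (x*y) = I x + I y) ∧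
      (∃ g, g ≠ 0 ∧ quadraticChar F g = -1 ∧ I g = 0) ∧ (2 * I 2 = w) ∧
      (∀ x, x ≠ 0 → χ x = (quadraticChar F x : ℂ) * (ζ^2)^(I x).val) := by
  have hMpos : 0 < M := by omega
  have : NeZero M := ⟨hMpos.ne'⟩
  have ζ0 : ζ ≠ 0 := hζ.ne_zero (by omega)
  have hχ1 : χ 1 = 1 := by
    have := hχmul 1 γ
    rw [one_mul, hχγ] at this
    exact mul_right_cancel₀ ζ0 (by rw [one_mul]; exact this.symm)
  have hχk : ∀ k : ℕ, χ (γ^k) = ζ^k := by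
    intro k
    induction k with
    | zero => simpa using hχ1
    | succ k ih => rw [pow_succ, hχmul, ih, hχγ, pow_succ]
  have inj : ∀ a b : ℕ, γ^a = γ^b → a ≡ b [MOD 2*M] := by
    intro a b hab
    have : ζ^a = ζ^b := by rw [← hχk, ← hχk, hab]
    rw [← ZMod.natCast_eq_natCast_iff]
    exact (aux_npow (by omega) hζ _ _).1 this
  have injM : ∀ a b : ℕ, γ^a = γ^b → (a : ZMod M) = b := by
    intro a b hab
    rw [ZMod.natCast_eq_natCast_iff]
    exact (inj a b hab).of_mul_left 2
  have hργ : quadraticChar F γ = -1 := by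
    rw [quadraticChar_neg_one_iff_not_isSquare]
    rintro ⟨y, hy⟩
    have y0 : y ≠ 0 := by rintro rfl; simp at hy; exact hγ0 hy
    obtain ⟨j, rfl⟩ := hγ y y0
    have h1 := (inj 1 (j+j) (by rw [pow_one, pow_add]; exact hy)).of_mul_right M
    have : 1 % 2 = (j+j) % 2 := h1
    omega
  choose! ind hind using hγ
  set m : ZMod M := (h:ZMod M)+1 with hm
  have h2m : 2 * m = 1 := by
    have : ((2*h+1 : ℕ) : ZMod M) = 0 := by rw [← hM]; simp
    push_cast at this
    rw [hm]; linear_combination this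
  have Ik : ∀ k : ℕ, (ind (γ^k) : ZMod M) = k := fun k =>
    injM _ _ (hind _ (pow_ne_zero _ hγ0))
  refine ⟨fun x => m * ind x, ?_, ⟨γ^M, pow_ne_zero _ hγ0, ?_, ?_⟩, ?_, ?_⟩
  · intro x y hx hy
    have : (ind (x*y) : ZMod M) = ((ind x + ind y : ℕ) : ZMod M) := by
      apply injM
      rw [pow_add, hind _ hx, hind _ hy, hind _ (mul_ne_zero hx hy)]
    simp only [this]; push_cast; ring
  · rw [map_pow, hργ, hM]; exact Odd.neg_one_pow ⟨h, rfl⟩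
  · simp only [Ik]; simp
  · obtain ⟨a, b, rfl⟩ : ∃ a b : ℕ, w = a - b := ⟨w.toNat, (-w).toNat, by omega⟩
    rw [zpow_sub₀ hγ0, zpow_natCast, zpow_natCast, div_eq_iff (pow_ne_zero _ hγ0)] at hw
    have : ((a : ℕ) : ZMod M) = ((ind 2 + b : ℕ) : ZMod M) := by
      apply injM
      rw [pow_add, hind _ two, hw]
    push_cast at this ⊢
    linear_combination (ind 2 : ZMod M) * h2m - this
  · intro x hx
    have hx' := hind x hx
    change χ x = (quadraticChar F x : ℂ) * (ζ^2)^(m * (ind x : ZMod M)).val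
    generalize ind x = k at hx' ⊢
    subst hx'
    rw [hχk, map_pow, hργ]
    have hζM : ζ^M = -1 := by
      have h1 : (ζ^M)^2 = 1 := by rw [← pow_mul, mul_comm]; exact hζ.pow_eq_one
      rcases sq_eq_one_iff.1 h1 with h | h
      · exact absurd h (hζ.pow_ne_one_of_pos_of_lt hMpos.ne' (by omega))
      · exact h
    have hζm : ζ = -(ζ^2)^(h+1) := by
      have : (ζ^2)^(h+1) = ζ^M * ζ := by rw [hM]; ring
      rw [this, hζM]; ring
    have hp : IsPrimitiveRoot (ζ^2) M := hζ.pow (by omega) rfl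
    have e : (ζ^2)^((m * (k:ZMod M)).val) = (ζ^2)^((h+1)*k) := by
      rw [aux_npow hMpos.ne' hp]
      simp [hm]
    rw [e]
    conv_lhs => rw [hζm]
    rw [neg_pow, pow_mul]; push_cast; rfl

theorem jacobiSum_coprime_congruence {F : Type*} [Field F] [Fintype F] [DecidableEq F]
    (l p r q : ℕ) (hl : l.Prime) (hl3 : 3 ≤ l) (hp : p.Prime) (hr : 0 < r)
    (hq : q = p ^ r) (hql : q % (2 * l ^ 2) = 1) (hcard : Fintype.card F = q)
    (γ : F) (hγ : ∀ x : F, x ≠ 0 → ∃ k : ℕ, γ ^ k = x)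
    (ζ : ℂ) (hζ : ζ = Complex.exp (2 * Real.pi * Complex.I / ((2 * l ^ 2 : ℕ) : ℂ)))
    (ζl : ℂ) (hζl : ζl = ζ ^ 2)
    (χ : F → ℂ) (hχ0 : χ 0 = 0) (hχγ : χ γ = ζ)
    (hχmul : ∀ x y : F, χ (x * y) = χ x * χ y)
    (w : ℤ) (hw : γ ^ w = 2)
    (n : ℤ) (hn1 : 1 ≤ n) (hn2 : n < 2 * (l : ℤ) ^ 2 - 1) (hnodd : Odd n)
    (hncop : IsCoprime n (2 * (l : ℤ) ^ 2)) :
    ∃ a b c : ℕ → ℤ,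
      IsIntegral ℤ ((jSum χ 1 n -
          ζl ^ (-(w * (n + 1))) *
            (-1 + ∑ i ∈ Finset.Icc 3 l, (a i : ℂ) * (ζl - 1) ^ i) *
            (-1 + ∑ i ∈ Finset.Icc 3 l, (b i : ℂ) * (ζl ^ n - 1) ^ i) *
            (-1 + ∑ i ∈ Finset.Icc 3 l, (c i : ℂ) * (ζl ^ ((1 - (l : ℤ) ^ 2) / 2) - 1) ^ i)) /
        (1 - ζl) ^ (l + 1)) := by
  have hMpos : 0 < l^2 := by have := hl.pos; positivity
  have hlodd : Odd l := hl.odd_of_ne_two (by omega)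
  obtain ⟨h, hh⟩ : Odd (l^2) := hlodd.pow
  have hprim : IsPrimitiveRoot ζ (2*l^2) := by
    rw [hζ]; exact Complex.isPrimitiveRoot_exp _ (by omega)
  have hp2 : IsPrimitiveRoot ζl (l^2) := by
    rw [hζl]; exact hprim.pow (by omega) rfl
  have ζ0 : ζ ≠ 0 := hprim.ne_zero (by omega)
  have ζl0 : ζl ≠ 0 := hp2.ne_zero (by omega)
  have hγ0 : γ ≠ 0 := by
    rintro rfl; rw [hχ0] at hχγ; exact ζ0 hχγ.symm
  have hF : ringChar F ≠ 2 := by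
    intro hc
    have := FiniteField.even_card_of_char_two hc
    rw [hcard] at this
    have h1 : q % (2*l^2) % 2 = q % 2 := Nat.mod_mul_right_mod q 2 (l^2)
    omega
  have two : (2:F) ≠ 0 := Ring.two_ne_zero hF
  obtain ⟨I, hI, ⟨g, hg, hρ, hIg⟩, hI2, hχI⟩ :=
    aux_ind (l^2) h hh γ hγ ζ hprim χ hχγ hγ0 hχmul w hw two
  rw [← hζl] at hχI
  have h2 : IsUnit (2 : ZMod (l^2)) := by
    have : ((2*h+1 : ℕ) : ZMod (l^2)) = 0 := by rw [← hh]; exact ZMod.natCast_self _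
    push_cast at this
    exact IsUnit.of_mul_eq_one ((h:ZMod (l^2))+1) (by linear_combination this)
  obtain ⟨m0, m1, m2⟩ := aux_moments hF h2 I hI g hg hρ hIg (n : ZMod (l^2))
  rw [hI2] at m1 m2
  have : NeZero (l^2) := ⟨hMpos.ne'⟩
  set s : F → ℤ := fun v => quadraticChar F (v*(v+1)) with hs
  set k : F → ℕ := fun v => (I v + (n : ZMod (l^2)) * I (v+1)).val with hk
  set k' : ℕ := (-((w : ZMod (l^2)) * (n+1))).val with hk'
  have hkc : ∀ v, ((k v : ℕ) : ZMod (l^2)) = I v + (n : ZMod (l^2)) * I (v+1) := by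
    intro v; simp [hk]
  have hkc' : ((k' : ℕ) : ZMod (l^2)) = -((w : ZMod (l^2)) * (n+1)) := by
    simp only [hk', ZMod.natCast_val, ZMod.cast_id', id]
  have ll : (l:ℤ) ∣ ((l^2 : ℕ) : ℤ) := by push_cast; exact dvd_pow_self _ two_ne_zero
  have hu : ζl ^ (-(w * (n + 1))) = ζl^k' := by
    rw [← zpow_natCast, aux_zpow hMpos.ne' hp2]
    rw [Int.cast_natCast, hkc']; push_cast; ring
  have hJ : jSum χ 1 n = ∑ v, (s v : ℂ) * ζl^(k v) := by
    unfold jSum charPow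
    refine Finset.sum_congr rfl fun v _ => ?_
    by_cases h0 : v = 0
    · simp [h0, hs]
    by_cases h1 : v + 1 = 0
    · simp [h1, hs]
    rw [if_neg h0, if_neg h1, hχI v h0, hχI _ h1, zpow_one, mul_zpow]
    have e1 : ((quadraticChar F (v+1) : ℤ) : ℂ)^n = (quadraticChar F (v+1) : ℤ) := by
      rcases quadraticChar_dichotomy h1 with h | h
      · rw [h]; simp
      · rw [h]; simp [hnodd.neg_one_zpow]
    have e2 : ζl^(k v) = ζl^(I v).val * (ζl^(I (v+1)).val)^n := by
      rw [← zpow_natCast, ← zpow_natCast, ← zpow_natCast, ← zpow_mul, ← zpow_add₀ ζl0,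
        aux_zpow hMpos.ne' hp2]
      push_cast
      rw [hkc]
      simp only [ZMod.natCast_val, ZMod.cast_id', id]
      ring
    rw [e1, e2]
    simp only [hs, map_mul]
    push_cast; ring
  set A := Algebra.adjoin ℤ {ζl - 1} with hA
  have hmem : ζl ∈ A := by
    have := A.add_mem (Algebra.subset_adjoin (Set.mem_singleton (ζl-1))) A.one_mem
    simpa using this
  set z : A := ⟨ζl, hmem⟩ with hz
  have hzp : IsPrimitiveRoot z (l^2) := by
    rw [← IsPrimitiveRoot.coe_submonoidClass_iff]; exact hp2
  have hzl := aux_l l hl hl3 z hzp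
  have hdvd := aux_cong l hlodd z hzl s k k' ?_ ?_ ?_
  · obtain ⟨y, hy⟩ := hdvd
    have hy' : ∑ v, (s v : ℂ) * ζl^(k v) + ζl^k' = (ζl-1)^3 * (y:ℂ) := by
      have := congrArg (Subtype.val : A → ℂ) hy
      simpa [hz] using this
    -- inverse of the unit
    set k2 : ℕ := (((w : ZMod (l^2)) * (n+1))).val with hk2
    have hinv : ζl^k' * ζl^k2 = 1 := by
      rw [← pow_add, ← pow_zero ζl, aux_npow hMpos.ne' hp2]
      push_cast
      rw [hkc']
      simp only [hk2, ZMod.natCast_val, ZMod.cast_id', id]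
      ring
    have hmem2 : (y:ℂ) * ζl^k2 ∈ A := A.mul_mem y.2 (A.pow_mem hmem _)
    have hAe : A = (Polynomial.aeval (ζl-1) : Polynomial ℤ →ₐ[ℤ] ℂ).range :=
      Algebra.adjoin_singleton_eq_range_aeval ℤ (ζl-1)
    generalize (y:ℂ) = yc at hmem2 hy'
    rw [hAe] at hmem2
    obtain ⟨P, hP⟩ := hmem2
    replace hP : Polynomial.aeval (ζl-1) P = yc * ζl^k2 := hP
    obtain ⟨a, Q, haQ⟩ := aux_trunc (ζl-1) (l-2) P
    refine ⟨fun i => a (i-3), 0, 0, ?_⟩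
    have hsum : ∑ i ∈ Finset.Icc 3 l, ((a (i-3) : ℤ) : ℂ) * (ζl-1)^i =
        (ζl-1)^3 * ∑ i ∈ range (l-2), (a i : ℂ) * (ζl-1)^i := by
      have : Finset.Icc 3 l = Finset.Ico 3 (l+1) := by ext i; simp
      rw [this, Finset.sum_Ico_eq_sum_range, Finset.mul_sum]
      have h3 : l + 1 - 3 = l - 2 := by omega
      rw [h3]
      refine Finset.sum_congr rfl fun i _ => ?_
      rw [Nat.add_sub_cancel_left]; ring
    have hne : 1 - ζl ≠ 0 := by
      intro h0
      have : ζl = 1 := by linear_combination -h0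
      exact hp2.ne_one (by nlinarith) this
    have key : (jSum χ 1 n -
          ζl ^ (-(w * (n + 1))) *
            (-1 + ∑ i ∈ Finset.Icc 3 l, ((a (i-3) : ℤ) : ℂ) * (ζl - 1) ^ i) *
            (-1 + ∑ i ∈ Finset.Icc 3 l, (((0 : ℕ → ℤ) i : ℤ) : ℂ) * (ζl ^ n - 1) ^ i) *
            (-1 + ∑ i ∈ Finset.Icc 3 l, (((0 : ℕ → ℤ) i : ℤ) : ℂ) * (ζl ^ ((1 - (l : ℤ) ^ 2) / 2) - 1) ^ i)) /
        (1 - ζl) ^ (l + 1) = (-1)^(l+1) * (ζl^k' * Polynomial.aeval (ζl-1) Q) := by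
      rw [div_eq_iff (pow_ne_zero _ hne), hsum, hu, hJ]
      have e3 : (1-ζl)^(l+1) = (-1)^(l+1) * ((ζl-1)^3 * (ζl-1)^(l-2)) := by
        rw [← pow_add, show 3 + (l-2) = l+1 by omega, ← mul_pow]; congr 1; ring
      have e4 : ((-1:ℂ)^(l+1)) * (-1)^(l+1) = 1 := by rw [← mul_pow]; simp
      rw [e3]
      simp only [Pi.zero_apply, Int.cast_zero, zero_mul, Finset.sum_const_zero, add_zero]
      have e5 : ∑ v, (s v : ℂ) * ζl^(k v) = (ζl-1)^3 * yc - ζl^k' := by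
        linear_combination hy'
      rw [e5]
      have e6 := haQ
      rw [hP] at e6
      linear_combination (-(ζl-1)^3 * yc) * hinv + ((ζl-1)^3 * ζl^k') * e6 -
        ((ζl-1)^3 * (ζl-1)^(l-2) * ζl^k' * Polynomial.aeval (ζl-1) Q) * e4
    rw [key]
    have iζ : IsIntegral ℤ ζl := hp2.isIntegral hMpos
    have iQ : IsIntegral ℤ (Polynomial.aeval (ζl-1) Q) := by
      have i1 : IsIntegral ℤ (ζl-1) := iζ.sub isIntegral_one
      exact Polynomial.aeval_mem_adjoin_singleton ℤ (ζl-1) |> fun hq => (Algebra.adjoin_le (S := integralClosure ℤ ℂ) (Set.singleton_subset_iff.2 i1)) hq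
    exact ((isIntegral_one.neg).pow _).mul ((iζ.pow _).mul iQ)
  · refine ll.trans ((ZMod.intCast_zmod_eq_zero_iff_dvd _ (l^2)).1 ?_)
    push_cast
    rw [m0]; ring
  · refine ll.trans ((ZMod.intCast_zmod_eq_zero_iff_dvd _ (l^2)).1 ?_)
    push_cast
    simp only [hkc, hkc']
    rw [m1]; ring
  · have h3 : ((l^2:ℕ):ℤ) ∣ 3 * (∑ v, s v * (k v)^2 + (k':ℤ)^2) := by
      refine (ZMod.intCast_zmod_eq_zero_iff_dvd _ (l^2)).1 ?_
      push_cast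
      simp only [hkc, hkc']
      rw [mul_add, m2]; ring
    by_contra hcon
    have hpl : Prime (l:ℤ) := Nat.prime_iff_prime_int.1 hl
    have hc : IsCoprime ((l^2:ℕ):ℤ) (∑ v, s v * (k v)^2 + (k':ℤ)^2) := by
      push_cast
      exact ((hpl.coprime_iff_not_dvd).2 hcon).pow_left
    have := Int.le_of_dvd (by norm_num) (hc.dvd_of_dvd_mul_right h3)
    push_cast at this
    have : (3:ℤ) ≤ l := by exact_mod_cast hl3
    nlinarith
end

section
/- Let d be an odd integer with 1 ≤ d ≤ 2l−1 and d ≠ l, and let w be an integer with γ^w = 2 in F_q (w = ind_γ 2). Then there exist rational integers a_3, …, a_l and b_3, …, b_l such that J_{2l²}(1, dl) ≡ −ζ_{l²}^{−w(dl+1)}·(−1 + Σ_{i=3}^{l} a_i (ζ_{l²} − 1)^i)·(−1 + Σ_{i=3}^{l} b_i (ζ_{l²}^{(−1−dl)/2} − 1)^i) (mod (1−ζ_{l²})^{l+1}). -/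
open Complex Finset

lemma aux_T {F Q : Type*} [Field F] [Fintype F] [DecidableEq F] [CommRing Q]
    (φ : MulChar F Q) (L : Q) (hL : L ^ 3 = 0) (hdiv : ∀ s : F, s ≠ 0 → L ∣ φ s - 1)
    (h1 : ∑ s, φ s = 0) (h2 : ∑ s, φ s ^ 2 = 0) (hq : (Fintype.card F : Q) = 1)
    (htwo : ∀ x : Q, 2 * x = 0 → x = 0) (hneg : φ (-1) = 1) :
    ∑ s, φ s * φ (s + 1) = -1 := by
  have h3 : ∀ a b c : Q, L ∣ a → L ∣ b → L ∣ c → a * b * c = 0 := by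
    rintro _ _ _ ⟨a, rfl⟩ ⟨b, rfl⟩ ⟨c, rfl⟩
    linear_combination a * b * c * hL
  have hne : (-1 : F) ≠ 0 := by simp
  have key : ∀ f : F → Q, ∑ s, f s = f 0 + f (-1) + ∑ s ∈ univ.filter (fun s : F => s ≠ 0 ∧ s ≠ -1), f s := by
    intro f
    rw [← Finset.sum_filter_add_sum_filter_not univ (fun s : F => s ≠ 0 ∧ s ≠ -1)]
    have : univ.filter (fun s : F => ¬ (s ≠ 0 ∧ s ≠ -1)) = {0, -1} := by
      ext s; simp; tauto
    rw [this, Finset.sum_pair hne.symm]; ring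
  set U := univ.filter (fun s : F => s ≠ 0 ∧ s ≠ -1) with hU
  have hmem : ∀ s, s ∈ U ↔ s ≠ 0 ∧ s ≠ -1 := by intro s; simp [hU]
  have e1 := key (fun s => φ s)
  have e2 := key (fun s => φ s ^ 2)
  have e3 := key (fun _ => (1 : Q))
  have e4 := key (fun s => φ s * φ (s + 1))
  have e5 := key (fun s => φ (s + 1))
  have hsh : ∑ s, φ (s + 1) = 0 := by
    rw [← h1]; exact Equiv.sum_comp (Equiv.addRight (1 : F)) (fun s => φ s)
  rw [hsh] at e5
  rw [h1] at e1
  rw [h2] at e2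
  simp [hneg, MulChar.map_zero] at e1 e2 e3 e4 e5
  rw [hq] at e3
  set A := ∑ s ∈ U, (φ s - 1) * (φ (s + 1) - 1) with hA
  have hsq : ∑ s ∈ U, (φ s - 1) ^ 2 = 0 := by
    have : ∑ s ∈ U, (φ s - 1) ^ 2 = ∑ s ∈ U, φ s ^ 2 - 2 * ∑ s ∈ U, φ s + ∑ s ∈ U, 1 := by
      rw [Finset.mul_sum, ← Finset.sum_sub_distrib, ← Finset.sum_add_distrib]
      exact Finset.sum_congr rfl fun s _ => by ring
    rw [this]; simp only [sum_const, nsmul_eq_mul, mul_one]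
    linear_combination -e2 + 2 * e1 - e3
  have hinv : A = -A + ∑ s ∈ U, (φ s - 1) ^ 2 := by
    have : A = ∑ s ∈ U, (φ s⁻¹ - 1) * (φ (s⁻¹ + 1) - 1) := by
      refine Finset.sum_nbij' (fun s => s⁻¹) (fun s => s⁻¹) ?_ ?_ ?_ ?_ ?_
      · intro s hs; rw [hmem] at *; refine ⟨inv_ne_zero hs.1, fun h => hs.2 ?_⟩
        rw [← inv_inv s, h]; norm_num
      · intro s hs; rw [hmem] at *; refine ⟨inv_ne_zero hs.1, fun h => hs.2 ?_⟩
        rw [← inv_inv s, h]; norm_num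
      · simp
      · simp
      · simp
    refine this.trans ?_
    rw [hA, ← Finset.sum_neg_distrib, ← Finset.sum_add_distrib]
    refine Finset.sum_congr rfl fun s hs => ?_
    rw [hmem] at hs
    have hs1 : s + 1 ≠ 0 := fun h => hs.2 (eq_neg_of_add_eq_zero_left h)
    have m1 : φ s * φ s⁻¹ = 1 := by rw [← map_mul, mul_inv_cancel₀ hs.1, map_one]
    have m2 : φ (s⁻¹ + 1) = φ (s + 1) * φ s⁻¹ := by
      rw [← map_mul]; congr 1; field_simp [hs.1]; ring
    have da := hdiv s hs.1
    have db := hdiv s⁻¹ (inv_ne_zero hs.1)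
    have dc := hdiv (s + 1) hs1
    rw [m2]
    obtain ⟨a, ha⟩ : ∃ a, a = φ s - 1 := ⟨_, rfl⟩
    obtain ⟨b, hb⟩ : ∃ a, a = φ s⁻¹ - 1 := ⟨_, rfl⟩
    obtain ⟨c, hc⟩ : ∃ a, a = φ (s + 1) - 1 := ⟨_, rfl⟩
    rw [← ha] at da; rw [← hb] at db; rw [← hc] at dc
    rw [show φ s = 1 + a by rw [ha]; ring, show φ s⁻¹ = 1 + b by rw [hb]; ring] at m1
    rw [show φ s = 1 + a by rw [ha]; ring, show φ s⁻¹ = 1 + b by rw [hb]; ring, show φ (s+1) = 1 + c by rw [hc]; ring]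
    have m : a + b + a * b = 0 := by linear_combination m1
    have t1 := h3 b b c db db dc
    have t2 := h3 a b c da db dc
    have t3 := h3 a b b da db db
    have t4 := h3 a a b da da db
    linear_combination (c + b - a) * m + t1 - t2 -t3 + t4
  have hA0 : A = 0 := htwo _ (by linear_combination hinv + hsq)
  have hAe : A = ∑ s ∈ U, φ s * φ (s + 1) - ∑ s ∈ U, φ s - ∑ s ∈ U, φ (s + 1) + ∑ s ∈ U, 1 := by
    rw [hA, ← Finset.sum_sub_distrib, ← Finset.sum_sub_distrib, ← Finset.sum_add_distrib]
    exact Finset.sum_congr rfl fun s _ => by ring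
  simp only [sum_const, nsmul_eq_mul, mul_one] at hAe
  rw [hA0] at hAe
  linear_combination e4 - e1 - e5 + e3 - hAe

lemma aux_Q {F Q : Type*} [Field F] [Fintype F] [DecidableEq F] [CommRing Q]
    (hF : ringChar F ≠ 2) (l : ℕ) (hlo : Odd l) (X : MulChar F Q) (γ : F)
    (hγ : ∀ x : F, x ≠ 0 → ∃ k : ℕ, γ ^ k = x) (x : Q) (hx : X γ = x) (hxl : x ^ l = -1)
    (hL : (x ^ 2 - 1) ^ 3 = 0) (hl0 : (l : Q) = 0) (hq : (Fintype.card F : Q) = 1)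
    (h1 : ∑ s, X s ^ (l - 1) = 0) (h2 : ∑ s, X s ^ (2 * (l - 1)) = 0)
    (k : ℕ) (hk : γ ^ k = 2) (d : ℕ) (hd : Odd d) :
    ∑ v, X v * X (v + 1) ^ (d * l) = - (x ^ 2) ^ (k * ((l ^ 2 - 1) * (d * l + 1))) := by
  obtain ⟨n, rfl⟩ := hlo
  simp only [Nat.add_sub_cancel] at h1 h2
  have h2F : (2 : F) ≠ 0 := Ring.two_ne_zero hF
  have htwo : ∀ y : Q, 2 * y = 0 → y = 0 := by
    intro y hy
    push_cast at hl0
    linear_combination y * hl0 - n * hy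
  have hx2 : x ^ (2 * (2 * n + 1)) = 1 := by rw [mul_comm, pow_mul, hxl]; norm_num
  have hXp : ∀ j : ℕ, X (γ ^ j) = x ^ j := by intro j; rw [map_pow, hx]
  have hγ0 : γ ≠ 0 := by
    rintro rfl
    rcases Nat.eq_zero_or_pos k with rfl | h
    · simp at hk
      have := hk
      have : (1 : F) = 0 := by linear_combination -hk
      exact one_ne_zero this
    · rw [zero_pow h.ne'] at hk; exact h2F hk.symm
  have hne : 2 * n ≠ 0 ∨ n = 0 := by omega
  rcases hne with hn | rfl
  swap
  · -- l = 1 impossible unless trivial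
    have h01 : (1 : Q) = 0 := by simpa using hl0
    have : Subsingleton Q := subsingleton_of_zero_eq_one h01.symm
    exact Subsingleton.elim _ _
  have hφ : ∀ s, (X ^ (2 * n)) s = X s ^ (2 * n) := fun s => MulChar.pow_apply' X hn s
  have hT := aux_T (X ^ (2 * n)) (x ^ 2 - 1) hL (by
      intro s hs
      obtain ⟨j, rfl⟩ := hγ s hs
      rw [hφ, hXp, ← pow_mul, show j * (2 * n) = 2 * (j * n) by ring, pow_mul]
      exact sub_one_dvd_pow_sub_one _ _) (by simpa [hφ] using h1)
      (by rw [← h2]; refine Finset.sum_congr rfl fun s _ => ?_; rw [hφ, ← pow_mul]; congr 1; ring)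
      hq htwo (by rw [hφ, pow_mul, ← map_pow]; simp)
  -- quadratic character
  have hqγ : quadraticChar F γ = -1 := by
    rcases quadraticChar_dichotomy hγ0 with h | h
    · exfalso
      apply quadraticChar_ne_one hF
      ext u
      obtain ⟨j, hj⟩ := hγ u u.ne_zero
      rw [← hj, map_pow, h, MulChar.one_apply]; simp
      exact (hj ▸ u.isUnit)
    · exact h
  have hρ : ∀ v : F, X v ^ (d * (2 * n + 1)) = ((quadraticChar F v : ℤ) : Q) := by
    intro v
    by_cases hv : v = 0
    · subst hv
      have : d * (2 * n + 1) ≠ 0 := by have := hd.pos; positivity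
      simp [MulChar.map_zero, this]
    · obtain ⟨j, rfl⟩ := hγ v hv
      rw [hXp, map_pow, hqγ, ← pow_mul, show j * (d * (2 * n + 1)) = (2 * n + 1) * d * j by ring, pow_mul, pow_mul, hxl, hd.neg_one_pow]
      push_cast; rfl
  have step1 : ∑ v, X v * X (v + 1) ^ (d * (2 * n + 1)) = ∑ u, X u ^ (2 * n) * ((quadraticChar F (u + 1) : ℤ) : Q) := by
    rw [← Equiv.sum_comp (Equiv.inv F)]
    refine Finset.sum_congr rfl fun u _ => ?_
    simp only [Equiv.inv_apply]
    by_cases hu : u = 0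
    · subst hu; simp [MulChar.map_zero, hn]
    · have : u⁻¹ + 1 = u⁻¹ * (u + 1) := by field_simp; ring
      show X u⁻¹ * X (u⁻¹ + 1) ^ _ = _
      rw [this, map_mul, mul_pow, hρ (u + 1), ← mul_assoc]
      congr 1
      have m1 : X u * X u⁻¹ = 1 := by rw [← map_mul, mul_inv_cancel₀ hu, map_one]
      obtain ⟨j, rfl⟩ := hγ u hu
      rw [hXp] at *
      have a1 : (x ^ j) ^ (d * (2 * n + 1)) = (-1) ^ j := by
        rw [← pow_mul, show j * (d * (2 * n + 1)) = (2 * n + 1) * d * j by ring, pow_mul, pow_mul, hxl, hd.neg_one_pow]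
      have a2 : X (γ ^ j)⁻¹ ^ (d * (2 * n + 1)) = (-1) ^ j := by
        have : (x ^ j) ^ (d * (2 * n + 1)) * X (γ ^ j)⁻¹ ^ (d * (2 * n + 1)) = 1 := by
          rw [← mul_pow, m1, one_pow]
        rw [a1] at this
        have s : ((-1 : Q) ^ j) * (-1) ^ j = 1 := by rw [← mul_pow]; simp
        linear_combination (-1) ^ j * this - X (γ ^ j)⁻¹ ^ (d * (2 * n + 1)) * s
      rw [a2]
      have a3 : (x ^ j) ^ (2 * n) * x ^ j = (-1) ^ j := by
        rw [← hxl, ← pow_mul, ← pow_add, ← pow_mul]; congr 1; ring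
      linear_combination - X (γ ^ j)⁻¹ * a3 + (x ^ j) ^ (2 * n) * m1
  have step2 : ∑ u, X u ^ (2 * n) * ((quadraticChar F (u + 1) : ℤ) : Q) = ∑ t, X (t ^ 2 - 1) ^ (2 * n) := by
    have : ∑ u, X u ^ (2 * n) * ((quadraticChar F (u + 1) : ℤ) : Q) = ∑ u, X u ^ (2 * n) * (((quadraticChar F (u + 1) + 1 : ℤ)) : Q) := by
      push_cast
      simp only [mul_add, mul_one, Finset.sum_add_distrib, h1, add_zero]
    rw [this, ← Finset.sum_fiberwise univ (fun t : F => t ^ 2 - 1) (fun t => X (t ^ 2 - 1) ^ (2 * n))]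
    refine Finset.sum_congr rfl fun u _ => ?_
    rw [← quadraticChar_card_sqrts hF (u + 1)]
    rw [Finset.sum_congr rfl (g := fun _ => X u ^ (2 * n)) (by intro t ht; simp at ht; rw [ht])]
    rw [Finset.sum_const, nsmul_eq_mul, mul_comm]
    congr 2
    push_cast
    congr 2
    ext t; simp [sub_eq_iff_eq_add]
  have step3 : ∑ t, X (t ^ 2 - 1) ^ (2 * n) = X 4 ^ (2 * n) * ∑ s, X s ^ (2 * n) * X (s + 1) ^ (2 * n) := by
    rw [Finset.mul_sum, ← Equiv.sum_comp ((Equiv.mulLeft₀ (2 : F) h2F).trans (Equiv.addRight 1))]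
    refine Finset.sum_congr rfl fun s _ => ?_
    rw [← mul_pow, ← mul_pow, ← map_mul, ← map_mul]
    congr 2
    simp; ring
  simp only [hφ] at hT
  rw [step1, step2, step3, hT, show (4 : F) = γ ^ (2 * k) by rw [mul_comm, pow_mul, hk]; norm_num, hXp]
  rw [mul_neg_one, ← pow_mul, ← pow_mul]
  congr 1
  have e : (2 * n + 1) ^ 2 - 1 = 4 * n ^ 2 + 4 * n := by
    rw [show (2 * n + 1) ^ 2 = 4 * n ^ 2 + 4 * n + 1 by ring]; rfl
  rw [e, show 2 * (k * ((4 * n ^ 2 + 4 * n) * (d * (2 * n + 1) + 1))) = 2 * k * (2 * n) + 2 * (2 * n + 1) * (k * ((4 * n ^ 2 + 4 * n) * d) + k * (2 * n)) by ring, pow_add, pow_mul x (2 * (2 * n + 1)), hx2, one_pow, mul_one]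

lemma aux_R {F R : Type*} [Field F] [Fintype F] [DecidableEq F] [CommRing R] [IsDomain R]
    (hF : ringChar F ≠ 2) (l : ℕ) (hl : l.Prime) (hl3 : 3 ≤ l) (X : MulChar F R) (γ : F)
    (hγ : ∀ x : F, x ≠ 0 → ∃ k : ℕ, γ ^ k = x) (x : R) (hx : X γ = x) (hxl : x ^ (l ^ 2) = -1)
    (z : R) (hz : x ^ 2 = z) (hprim : IsPrimitiveRoot z (l ^ 2))
    (hq : l ∣ Fintype.card F - 1)
    (k : ℕ) (hk : γ ^ k = 2) (d : ℕ) (hd : Odd d) :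
    (z - 1) ^ 3 ∣ ∑ v, X v * X (v + 1) ^ (d * l) + z ^ (k * ((l ^ 2 - 1) * (d * l + 1))) := by
  have hlo : Odd l := hl.odd_of_ne_two (by omega)
  have hl2 : 0 < l ^ 2 := by positivity
  have hdvdl : (z - 1) ^ 3 ∣ (l : R) := by
    have : Fact l.Prime := ⟨hl⟩
    have e : (Polynomial.cyclotomic (l ^ 2) R).eval 1 = (l : R) := by
      have := Polynomial.eval_one_cyclotomic_prime_pow (R := R) (p := l) 1
      simpa using this
    rw [Polynomial.cyclotomic_eq_prod_X_sub_primitiveRoots hprim, Polynomial.eval_prod] at e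
    rw [← e]
    refine (pow_dvd_pow (z - 1) (m := 3) (n := (primitiveRoots (l ^ 2) R).card) ?_).trans ?_
    · rw [hprim.card_primitiveRoots, Nat.totient_prime_pow hl (by norm_num)]
      obtain ⟨m, rfl⟩ : ∃ m, l = m + 3 := ⟨l - 3, by omega⟩
      simp
      nlinarith
    · rw [← Finset.prod_const]
      refine Finset.prod_dvd_prod_of_dvd _ _ ?_
      intro μ hμ
      rw [mem_primitiveRoots hl2] at hμ
      obtain ⟨i, _, _, rfl⟩ := (have : NeZero (l ^ 2) := ⟨hl2.ne'⟩; hprim.isPrimitiveRoot_iff.1 hμ)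
      simp only [Polynomial.eval_sub, Polynomial.eval_X, Polynomial.eval_C]
      rw [← dvd_neg, neg_sub]
      exact sub_one_dvd_pow_sub_one _ _
  have hzl : (z - 1) ^ 3 ∣ z ^ l - 1 := by
    obtain ⟨r, hr⟩ := exists_add_pow_prime_eq hl (z - 1) 1
    rw [sub_add_cancel, one_pow] at hr
    rw [hr]
    have : (z - 1) ^ l + 1 + l * (z - 1) * 1 * r - 1 = (z - 1) ^ l + l * ((z - 1) * r) := by ring
    rw [this]
    exact dvd_add (pow_dvd_pow _ hl3) (hdvdl.mul_right _)
  set I : Ideal R := Ideal.span {(z - 1) ^ 3} with hI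
  let f := Ideal.Quotient.mk I
  have hf : ∀ y : R, f y = 0 ↔ (z - 1) ^ 3 ∣ y := by
    intro y
    rw [Ideal.Quotient.eq_zero_iff_mem, hI, Ideal.mem_span_singleton]
  have hzl1 : f x ^ (2 * l) = 1 := by
    have := (hf _).2 hzl
    rw [← hz, map_sub, map_pow, map_pow, map_one, ← pow_mul] at this
    exact sub_eq_zero.1 this
  have hxl1 : f x ^ l = -1 := by
    have h := congrArg f hxl
    obtain ⟨n, hn⟩ := hlo
    have e : l ^ 2 = 2 * l * n + l := by
      nth_rewrite 1 [pow_two, hn]; ring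
    rw [map_pow, map_neg, map_one, e, pow_add, pow_mul, hzl1, one_pow, one_mul] at h
    exact h
  have hz1 : ∀ m, 0 < m → m < l ^ 2 → z ^ m ≠ 1 := fun m h1 h2 => hprim.pow_ne_one_of_pos_of_lt h1.ne' h2
  have hll : l - 1 < l ^ 2 := by
    have : l ≤ l ^ 2 := Nat.le_self_pow (by norm_num) l
    omega
  have hγu : IsUnit γ := by
    by_contra h
    have h0 : γ = 0 := by simpa using h
    rw [h0, MulChar.map_zero] at hx
    rw [← hx, zero_pow hl2.ne'] at hxl
    have : (1 : R) = 0 := by linear_combination hxl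
    exact one_ne_zero this
  have hs2 : ∑ s, X s ^ (2 * (l - 1)) = 0 := by
    have hne : X ^ (2 * (l - 1)) ≠ 1 := by
      intro h
      have := congrArg (fun (Y : MulChar F R) => Y γ) h
      simp only [MulChar.one_apply hγu] at this
      rw [MulChar.pow_apply' X (by omega), hx, pow_mul, hz] at this
      exact hz1 _ (by omega) hll this
    rw [← MulChar.sum_eq_zero_of_ne_one hne]
    exact Finset.sum_congr rfl fun s _ => (MulChar.pow_apply' X (by omega) s).symm
  have hs1 : ∑ s, X s ^ (l - 1) = 0 := by
    have hne : X ^ (l - 1) ≠ 1 := by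
      intro h
      have := congrArg (fun (Y : MulChar F R) => Y γ) h
      simp only [MulChar.one_apply hγu] at this
      rw [MulChar.pow_apply' X (by omega), hx] at this
      apply hz1 (l - 1) (by omega) hll
      rw [← hz, ← pow_mul, mul_comm, pow_mul, this, one_pow]
    rw [← MulChar.sum_eq_zero_of_ne_one hne]
    exact Finset.sum_congr rfl fun s _ => (MulChar.pow_apply' X (by omega) s).symm
  have hl0 : ((l : ℕ) : R ⧸ I) = 0 := by
    have := (hf _).2 hdvdl
    simpa using this
  have key := aux_Q hF l hlo (X.ringHomComp f) γ hγ (f x) (by simp [hx]) hxl1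
    (by have := (hf _).2 (dvd_refl ((z - 1) ^ 3)); rw [← hz] at this; simpa using this)
    hl0
    (by
      obtain ⟨c, hc⟩ := hq
      have : Fintype.card F = l * c + 1 := by
        have := Fintype.card_pos (α := F); omega
      rw [this]; push_cast; rw [hl0]; ring)
    (by simpa using congrArg f hs1) (by simpa using congrArg f hs2) k hk d hd
  rw [← hf, map_add, map_sum]
  simp only [MulChar.ringHomComp_apply] at key
  simp only [map_mul, map_pow]
  rw [key, ← hz, map_pow]; ring

lemma aux_trunc_s19 (z : ℂ) (n : ℕ) (y : Algebra.adjoin ℤ {z}) :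
    ∃ p : ℕ → ℤ, ∃ r ∈ Algebra.adjoin ℤ {z},
      (y : ℂ) = ∑ j ∈ Finset.range n, (p j : ℂ) * (z - 1) ^ j + (z - 1) ^ n * r := by
  have hbase : ∀ y : ℂ, y ∈ Algebra.adjoin ℤ {z} → ∃ c : ℤ, ∃ r ∈ Algebra.adjoin ℤ {z}, y = c + (z - 1) * r := by
    intro y hy
    rw [Algebra.adjoin_singleton_eq_range_aeval] at hy
    obtain ⟨P, rfl⟩ := hy
    obtain ⟨G, hG⟩ := Polynomial.X_sub_C_dvd_sub_C_eval (p := P) (a := 1)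
    refine ⟨P.eval 1, Polynomial.aeval z G, ?_, ?_⟩
    · rw [Algebra.adjoin_singleton_eq_range_aeval]; exact ⟨G, rfl⟩
    · have := congrArg (Polynomial.aeval z) hG
      simp at this
      show Polynomial.aeval z P = _
      linear_combination this
  induction n with
  | zero => exact ⟨0, y, y.2, by simp⟩
  | succ n ih =>
    obtain ⟨p, r, hr, e⟩ := ih
    obtain ⟨c, r', hr', e'⟩ := hbase r hr
    refine ⟨fun j => if j = n then c else p j, r', hr', ?_⟩
    rw [Finset.sum_range_succ, e, e']
    have hs : ∑ j ∈ Finset.range n, (((if j = n then c else p j : ℤ)) : ℂ) * (z - 1) ^ j =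
        ∑ j ∈ Finset.range n, (p j : ℂ) * (z - 1) ^ j :=
      Finset.sum_congr rfl fun j hj => by
        rw [if_neg (Finset.mem_range.1 hj).ne]
    simp only [hs, if_true]; ring

theorem jacobiSum_dl_congruence_full {F : Type*} [Field F] [Fintype F] [DecidableEq F]
    (l p r q : ℕ) (hl : l.Prime) (hl3 : 3 ≤ l) (hp : p.Prime) (hr : 0 < r)
    (hq : q = p ^ r) (hql : q % (2 * l ^ 2) = 1) (hcard : Fintype.card F = q)
    (γ : F) (hγ : ∀ x : F, x ≠ 0 → ∃ k : ℕ, γ ^ k = x)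
    (ζ : ℂ) (hζ : ζ = Complex.exp (2 * Real.pi * Complex.I / ((2 * l ^ 2 : ℕ) : ℂ)))
    (ζl : ℂ) (hζl : ζl = ζ ^ 2)
    (χ : F → ℂ) (hχ0 : χ 0 = 0) (hχγ : χ γ = ζ)
    (hχmul : ∀ x y : F, χ (x * y) = χ x * χ y)
    (w : ℤ) (hw : γ ^ w = 2)
    (d : ℤ) (hd1 : 1 ≤ d) (hd2 : d ≤ 2 * (l : ℤ) - 1) (hdodd : Odd d) (hdl : d ≠ (l : ℤ)) :
    ∃ a b : ℕ → ℤ,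
      IsIntegral ℤ ((jSum χ 1 (d * l) +
          ζl ^ (-(w * (d * l + 1))) *
            (-1 + ∑ i ∈ Finset.Icc 3 l, (a i : ℂ) * (ζl - 1) ^ i) *
            (-1 + ∑ i ∈ Finset.Icc 3 l, (b i : ℂ) * (ζl ^ ((-1 - d * (l : ℤ)) / 2) - 1) ^ i)) /
        (1 - ζl) ^ (l + 1)) := by
  obtain ⟨m, rfl⟩ := Int.eq_ofNat_of_zero_le (by omega : 0 ≤ d)
  have hmodd : Odd m := by exact_mod_cast hdodd
  have hmpos : 0 < m := hmodd.pos
  have hl2 : 0 < l ^ 2 := by positivity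
  have hprimζ : IsPrimitiveRoot ζ (2 * l ^ 2) := by
    rw [hζ]; exact Complex.isPrimitiveRoot_exp _ (by positivity)
  have hprim : IsPrimitiveRoot ζl (l ^ 2) := by
    rw [hζl]; exact hprimζ.pow (by positivity) rfl
  have hζ0 : ζ ≠ 0 := hprimζ.ne_zero (by positivity)
  have hζl0 : ζl ≠ 0 := by rw [hζl]; exact pow_ne_zero _ hζ0
  have hζm : ζ ^ (l ^ 2) = -1 := by
    have h1 : (ζ ^ (l ^ 2)) ^ 2 = 1 := by rw [← pow_mul, mul_comm, hprimζ.pow_eq_one]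
    have h2 : ζ ^ (l ^ 2) ≠ 1 := hprimζ.pow_ne_one_of_pos_of_lt hl2.ne' (by omega)
    rcases mul_self_eq_one_iff.1 ((pow_two _).symm.trans h1) with h | h
    · exact absurd h h2
    · exact h
  have hlo : Odd l := hl.odd_of_ne_two (by omega)
  obtain ⟨c, hc⟩ : Odd (l ^ 2) := hlo.pow
  set R := Algebra.adjoin ℤ {ζl} with hR
  have hζlR : ζl ∈ R := Algebra.self_mem_adjoin_singleton ℤ ζl
  have hζR : ζ ∈ R := by
    have : ζ = -ζl ^ (c + 1) := by
      rw [hζl, ← pow_mul, show 2 * (c + 1) = l ^ 2 + 1 by omega, pow_succ, hζm]; ring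
    rw [this]; exact neg_mem (pow_mem hζlR _)
  -- the prime field facts
  have hqd : q = 2 * l ^ 2 * (q / (2 * l ^ 2)) + 1 := by
    have := Nat.div_add_mod q (2 * l ^ 2); omega
  have hF : ringChar F ≠ 2 := by
    intro h
    have := FiniteField.even_card_of_char_two h
    rw [hcard, hqd, mul_assoc] at this
    omega
  have h2F : (2 : F) ≠ 0 := Ring.two_ne_zero hF
  have hγ0 : γ ≠ 0 := by
    rintro rfl; rw [hχ0] at hχγ; exact hζ0 hχγ.symm
  have hχ1 : χ 1 = 1 := by
    have := hχmul γ 1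
    rw [mul_one, hχγ] at this
    exact (mul_left_cancel₀ hζ0 (by rw [mul_one]; exact this)).symm
  have hχpow : ∀ j : ℕ, χ (γ ^ j) = ζ ^ j := by
    intro j
    induction j with
    | zero => simpa using hχ1
    | succ j ih => rw [pow_succ, hχmul, ih, hχγ, pow_succ]
  have hχR : ∀ v, χ v ∈ R := by
    intro v
    by_cases hv : v = 0
    · rw [hv, hχ0]; exact zero_mem _
    · obtain ⟨j, rfl⟩ := hγ v hv
      rw [hχpow]; exact pow_mem hζR _
  let X : MulChar F R :=
    { toFun := fun v => ⟨χ v, hχR v⟩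
      map_one' := Subtype.ext hχ1
      map_mul' := fun a b => Subtype.ext (hχmul a b)
      map_nonunit' := fun a ha => by
        have : a = 0 := by simpa using ha
        subst this
        exact Subtype.ext hχ0 }
  have hX : ∀ v, ((X v : R) : ℂ) = χ v := fun v => rfl
  obtain ⟨k, hk⟩ := hγ 2 h2F
  have hprimR : IsPrimitiveRoot (⟨ζl, hζlR⟩ : R) (l ^ 2) := by
    refine IsPrimitiveRoot.of_map_of_injective (f := R.val) (by exact hprim) Subtype.val_injective
  have hdv := aux_R hF l hl hl3 X γ hγ ⟨ζ, hζR⟩ (Subtype.ext hχγ) (Subtype.ext (by simpa using hζm))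
    ⟨ζl, hζlR⟩ (Subtype.ext (by simpa using hζl.symm)) hprimR
    (by
      rw [hcard, hqd, Nat.add_sub_cancel]
      exact Dvd.intro (2 * l * (q / (2 * l ^ 2))) (by ring)) k hk m hmodd
  obtain ⟨y, hy⟩ := hdv
  have hy' := congrArg (fun u : R => (u : ℂ)) hy
  simp only [Subalgebra.coe_add, Subalgebra.coe_mul, Subalgebra.coe_pow, AddSubmonoidClass.coe_finsetSum, Subalgebra.coe_sub, Subalgebra.coe_one, hX] at hy'
  have hJ : jSum χ 1 ((m : ℤ) * l) = ∑ v, χ v * χ (v + 1) ^ (m * l) := by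
    unfold jSum charPow
    refine Finset.sum_congr rfl fun v _ => ?_
    have hml : m * l ≠ 0 := by positivity
    congr 1
    · split_ifs with h
      · rw [h, hχ0]
      · simp
    · split_ifs with h
      · rw [h, hχ0, zero_pow hml]
      · rw [← zpow_natCast]; push_cast; rfl
  rw [← hJ] at hy'
  -- the root of unity
  have hχz : ∀ j : ℤ, χ (γ ^ j) = ζ ^ j := by
    intro j
    obtain ⟨n, rfl | rfl⟩ := j.eq_nat_or_neg
    · simpa using hχpow n
    · rw [zpow_neg, zpow_neg, zpow_natCast, zpow_natCast]
      apply eq_inv_of_mul_eq_one_left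
      rw [← hχpow, ← hχmul, inv_mul_cancel₀ (pow_ne_zero _ hγ0), hχ1]
  have hwk : ζl ^ w = ζl ^ k := by
    have h1 : ζ ^ w = ζ ^ k := by rw [← hχz, hw, ← hχpow, hk]
    rw [hζl, ← pow_mul, mul_comm, pow_mul, ← h1, ← zpow_natCast, ← zpow_natCast, ← zpow_mul, ← zpow_mul, mul_comm]
  have hroot : ζl ^ (-(w * ((m : ℤ) * l + 1))) = ζl ^ (k * ((l ^ 2 - 1) * (m * l + 1))) := by
    rw [zpow_neg]
    symm
    apply eq_inv_of_mul_eq_one_left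
    have e1 : ζl ^ (w * ((m : ℤ) * l + 1)) = ζl ^ (k * (m * l + 1)) := by
      rw [zpow_mul, hwk, pow_mul, ← zpow_natCast (ζl ^ k)]; push_cast; rfl
    rw [e1, ← pow_add]
    obtain ⟨e, he⟩ : ∃ e, l ^ 2 = e + 1 := ⟨l ^ 2 - 1, by omega⟩
    have e2 : k * ((l ^ 2 - 1) * (m * l + 1)) + k * (m * l + 1) = l ^ 2 * (k * (m * l + 1)) := by
      rw [he, Nat.add_sub_cancel]; ring
    rw [e2, pow_mul, hprim.pow_eq_one, one_pow]
  rw [hroot]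
  set N := k * ((l ^ 2 - 1) * (m * l + 1)) with hN
  -- inverse of ζl ^ N
  obtain ⟨M, hM⟩ : ∃ M : ℕ, ζl ^ N * ζl ^ M = 1 := by
    refine ⟨N * (l ^ 2 - 1), ?_⟩
    rw [← pow_add, show N + N * (l ^ 2 - 1) = l ^ 2 * N by
      obtain ⟨e, he⟩ : ∃ e, l ^ 2 = e + 1 := ⟨l ^ 2 - 1, by omega⟩
      rw [he, Nat.add_sub_cancel]; ring, pow_mul, hprim.pow_eq_one, one_pow]
  obtain ⟨p', r', hr', he⟩ := aux_trunc_s19 ζl (l - 2) (y * ⟨ζl ^ M, pow_mem hζlR M⟩)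
  simp only [Subalgebra.coe_mul] at he
  refine ⟨fun i => p' (i - 3), 0, ?_⟩
  have hsum : ∑ i ∈ Finset.Icc 3 l, ((p' (i - 3) : ℤ) : ℂ) * (ζl - 1) ^ i =
      (ζl - 1) ^ 3 * ∑ j ∈ Finset.range (l - 2), (p' j : ℂ) * (ζl - 1) ^ j := by
    rw [Finset.mul_sum, ← Finset.Ico_add_one_right_eq_Icc, Finset.sum_Ico_eq_sum_range]
    rw [show l + 1 - 3 = l - 2 by omega]
    refine Finset.sum_congr rfl fun j _ => ?_
    rw [Nat.add_sub_cancel_left, pow_add]; ring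
  have hne : 1 - ζl ≠ 0 := by
    intro h
    refine hprim.pow_ne_one_of_pos_of_lt one_ne_zero (by nlinarith) ?_
    linear_combination -h
  have hpow : (ζl - 1) ^ (l + 1) = (1 - ζl) ^ (l + 1) := by
    have : Even (l + 1) := hlo.add_one
    rw [← neg_sub, this.neg_pow]
  have hfin : (jSum χ 1 ((m : ℤ) * l) + ζl ^ N *
        (-1 + ∑ i ∈ Finset.Icc 3 l, ((p' (i - 3) : ℤ) : ℂ) * (ζl - 1) ^ i) *
            (-1 + ∑ i ∈ Finset.Icc 3 l, (((0 : ℕ → ℤ) i : ℤ) : ℂ) * (ζl ^ ((-1 - (m : ℤ) * (l : ℤ)) / 2) - 1) ^ i)) =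
        (ζl ^ N * r') * (1 - ζl) ^ (l + 1) := by
    rw [hsum, ← hpow]
    simp only [Pi.zero_apply, Int.cast_zero, zero_mul, Finset.sum_const_zero, add_zero]
    obtain ⟨S, hS⟩ : ∃ S, S = ∑ j ∈ Finset.range (l - 2), (p' j : ℂ) * (ζl - 1) ^ j := ⟨_, rfl⟩
    rw [← hS] at he ⊢
    rw [show l + 1 = 3 + (l - 2) by omega, pow_add]
    linear_combination hy' - (ζl - 1) ^ 3 * y * hM + (ζl - 1) ^ 3 * ζl ^ N * he
  rw [hfin, mul_div_cancel_right₀ _ (pow_ne_zero _ hne)]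
  have hint : IsIntegral ℤ ζl := hprim.isIntegral hl2
  have hle : R ≤ integralClosure ℤ ℂ := Algebra.adjoin_le (Set.singleton_subset_iff.2 hint)
  exact hle (mul_mem (pow_mem hζlR N) hr')
end
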